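/- Fix an integer P ≥ 2 and let β ∈ (0, 1/2). There exists a constant C = C(β,P) such that for every real α with |α| ≥ 1, every δ ∈ (0,1], and every continuous f : [0,∞) → ℂ with ‖f‖_{β,δ,1} < ∞, the function φ(z) = −(1/(2|α|)) ∫₀^∞ ( e^{−|α||x−z|} − e^{−|α|(x+z)} ) f(x) dx, which is the decaying solution of φ'' − α²φ = f on (0,∞) with φ(0) = 0, satisfies α² ‖φ‖_β + |α| ‖φ'‖_β + ‖φ''‖_{β,δ,1} ≤ C |α| ‖f‖_{β,δ,1}. -/

import Mathlib

open scoped ENNReal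

/-- The boundary-layer weight `W_{p,δ}(z) = 1 + Σ_{q=1}^{p} δ^{−q} (1 + (z/δ)^{P−1+q})^{−1}`. -/
noncomputable def wt (P p : ℕ) (δ z : ℝ) : ℝ :=
  1 + ∑ q ∈ Finset.Icc 1 p, (δ ^ q)⁻¹ * (1 + (z / δ) ^ (P - 1 + q))⁻¹

/-- The boundary-layer norm `‖ω‖_{β,δ,p} = sup_{z≥0} W_{p,δ}(z)^{−1} e^{βz}|ω(z)|`. -/
noncomputable def blNorm (P : ℕ) (β δ : ℝ) (p : ℕ) (ω : ℝ → ℂ) : ℝ≥0∞ :=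
  ⨆ z : Set.Ici (0:ℝ), ENNReal.ofReal ((wt P p δ z.1)⁻¹ * Real.exp (β * z.1) * ‖ω z.1‖)

/-- The exponentially weighted sup norm `‖g‖_β = sup_{z≥0} e^{βz}|g(z)|`. -/
noncomputable def expNorm (β : ℝ) (g : ℝ → ℂ) : ℝ≥0∞ :=
  ⨆ z : Set.Ici (0:ℝ), ENNReal.ofReal (Real.exp (β * z.1) * ‖g z.1‖)

/-- The Green's function solution
`φ(z) = −(1/(2α)) ∫₀^∞ ( e^{−α|x−z|} − e^{−α(x+z)} ) f(x) dx` of `φ'' − α²φ = f`, `φ(0)=0`. -/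
noncomputable def greenSol (α : ℝ) (f : ℝ → ℂ) (z : ℝ) : ℂ :=
  -(1 / (2 * (α:ℂ))) * ∫ x in Set.Ici (0:ℝ),
    ((Real.exp (-(α * |x - z|)) - Real.exp (-(α * (x + z))) : ℝ) : ℂ) * f x

/-!
The operator factors as `φ'' - a²φ = (∂ - a)(∂ + a)φ`, so the Green's function solution is
`(u - v) / (2a)`, where `u' = au + f` and `v' = -av + f` start from the common value
`u(0) = v(0) = -∫₀^∞ e^{-ax} f(x) dx`, the only one for which `u` does not grow. Hence
`φ' = (u + v) / 2` and `φ'' = a²φ + f`. Both `|φ|` and `|φ'|` are controlled by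
`∫₀^∞ e^{-a|x-z|} |f(x)| dx`. In this integral the triangle inequality moves the decay `e^{-βx}` of
`f` to `e^{-βz}` at the price of weakening the kernel to `e^{-(a-|β|)|x-z|}`, and the boundary-layer
part of the weight has mass at most `π`, uniformly in `δ`.
-/

open MeasureTheory Set Real

section GreenFunction

variable {E : Type*} [NormedAddCommGroup E] [NormedSpace ℝ E] {a c z : ℝ} {K : E} {f : ℝ → E}

/-- Duhamel's formula for the solution of `u' = c u + f`, `u 0 = K`. -/
noncomputable def duhamel (c : ℝ) (K : E) (f : ℝ → E) (z : ℝ) : E :=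
  exp (c * z) • (K + ∫ x in 0..z, exp (-(c * x)) • f x)

/-- The Laplace transform of `f` at a real point `a`, as an improper integral over the open
half-line. -/
noncomputable def laplaceIntegral (a : ℝ) (f : ℝ → E) : E :=
  ∫ x in Ioi 0, exp (-(a * x)) • f x

/-- The potential of `|f|` on the half-line for the free kernel `e^{-a|x-z|}`; it dominates the
Green's function solution and its derivative. -/
noncomputable def absPotential (a : ℝ) (f : ℝ → E) (z : ℝ) : ℝ :=
  ∫ x in Ioi 0, exp (-(a * |x - z|)) * ‖f x‖

theorem hasDerivWithinAt_integral_Ici [CompleteSpace E] {b : ℝ} (hf : ContinuousOn f (Ici b))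
    (hz : b ≤ z) : HasDerivWithinAt (fun u ↦ ∫ x in b..u, f x) (f z) (Ici b) z := by
  let g : ℝ → E := fun x ↦ f (max b x)
  have hg : Continuous g := hf.comp_continuous (by fun_prop) fun x ↦ le_max_left b x
  have hgf (x : ℝ) (hx : b ≤ x) : g x = f x := by simp only [g, max_eq_right hx]
  rw [← hgf z hz]
  refine (hg.integral_hasStrictDerivAt b z).hasDerivAt.hasDerivWithinAt.congr_of_mem ?_ hz
  exact fun u hu ↦ intervalIntegral.integral_congr fun x hx ↦
    (hgf x (by rw [uIcc_of_le hu] at hx; exact hx.1)).symm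

theorem hasDerivWithinAt_duhamel [CompleteSpace E] (hf : ContinuousOn f (Ici 0)) (hz : 0 ≤ z) :
    HasDerivWithinAt (duhamel c K f) (c • duhamel c K f z + f z) (Ici 0) z := by
  have hexp : HasDerivWithinAt (fun u ↦ exp (c * u)) (exp (c * z) * c) (Ici 0) z := by
    simpa using ((hasDerivAt_id z).const_mul c).exp.hasDerivWithinAt
  have hint : HasDerivWithinAt (fun u ↦ K + ∫ x in 0..u, exp (-(c * x)) • f x)
      (exp (-(c * z)) • f z) (Ici 0) z :=
    (hasDerivWithinAt_integral_Ici (ContinuousOn.smul (by fun_prop) hf) hz).const_add K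
  refine (hexp.smul hint).congr_deriv ?_
  rw [smul_smul, ← exp_add, add_neg_cancel, exp_zero, one_smul, duhamel, smul_smul,
    mul_comm (exp _), add_comm]

theorem duhamel_neg_laplaceIntegral (hfi : IntegrableOn (fun x ↦ exp (-(a * x)) • f x) (Ioi 0))
    (hz : 0 ≤ z) :
    duhamel a (-laplaceIntegral a f) f z = -∫ x in Ioi z, exp (-(a * |x - z|)) • f x := by
  have htail : -laplaceIntegral a f + ∫ x in 0..z, exp (-(a * x)) • f x
      = -∫ x in Ioi z, exp (-(a * x)) • f x := by
    rw [laplaceIntegral, ← intervalIntegral.integral_Ioi_sub_Ioi hfi hz]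
    abel
  rw [duhamel, htail, smul_neg, ← integral_smul]
  refine congrArg Neg.neg (setIntegral_congr_fun measurableSet_Ioi fun x (hx : z < x) ↦ ?_)
  simp only [smul_smul, ← exp_add]
  rw [abs_of_pos (sub_pos.mpr hx)]
  ring_nf

theorem duhamel_neg_neg_laplaceIntegral (hz : 0 ≤ z) :
    duhamel (-a) (-laplaceIntegral a f) f z
      = (∫ x in Ioc 0 z, exp (-(a * |x - z|)) • f x)
        - ∫ x in Ioi 0, exp (-(a * (x + z))) • f x := by
  rw [duhamel, laplaceIntegral, intervalIntegral.integral_of_le hz, neg_add_eq_sub, smul_sub,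
    ← integral_smul, ← integral_smul]
  congr 1
  · refine setIntegral_congr_fun measurableSet_Ioc fun x hx ↦ ?_
    simp only [smul_smul, ← exp_add]
    rw [abs_of_nonpos (sub_nonpos.mpr hx.2)]
    ring_nf
  · simp only [smul_smul, ← exp_add]
    ring_nf

theorem integrableOn_exp_neg_mul_abs_sub_smul (ha : 0 ≤ a)
    (hfi : IntegrableOn (fun x ↦ exp (-(a * x)) • f x) (Ioi 0)) (z : ℝ) :
    IntegrableOn (fun x ↦ exp (-(a * |x - z|)) • f x) (Ioi 0) := by
  have hbdd (x : ℝ) : ‖exp (a * (x - |x - z|))‖ ≤ exp (a * z) := by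
    rw [norm_of_nonneg (exp_nonneg _)]
    gcongr
    linarith [le_abs_self (x - z)]
  refine (Integrable.bdd_smul (φ := fun x ↦ exp (a * (x - |x - z|))) hfi (exp (a * z))
    (by fun_prop) (ae_of_all _ hbdd)).congr (ae_of_all _ fun x ↦ ?_)
  simp only [Pi.smul_apply', smul_smul, ← exp_add]
  ring_nf

theorem integrableOn_exp_neg_mul_add_smul
    (hfi : IntegrableOn (fun x ↦ exp (-(a * x)) • f x) (Ioi 0)) (z : ℝ) :
    IntegrableOn (fun x ↦ exp (-(a * (x + z))) • f x) (Ioi 0) := by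
  refine (Integrable.smul (exp (-(a * z))) hfi).congr (ae_of_all _ fun x ↦ ?_)
  simp only [Pi.smul_apply, smul_smul, ← exp_add]
  ring_nf

theorem exp_neg_mul_add_le {x : ℝ} (ha : 0 ≤ a) (hx : 0 ≤ x) (hz : 0 ≤ z) :
    exp (-(a * (x + z))) ≤ exp (-(a * |x - z|)) := by
  gcongr
  exact abs_le.mpr ⟨by linarith, by linarith⟩

theorem norm_integral_smul_le_absPotential {k : ℝ → ℝ} (ha : 0 ≤ a)
    (hfi : IntegrableOn (fun x ↦ exp (-(a * x)) • f x) (Ioi 0))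
    (hk : ∀ x, 0 ≤ x → |k x| ≤ exp (-(a * |x - z|))) :
    ‖∫ x in Ioi 0, k x • f x‖ ≤ absPotential a f z := by
  refine norm_integral_le_of_norm_le ?_
    ((ae_restrict_mem measurableSet_Ioi).mono fun x (hx : 0 < x) ↦ ?_)
  · simpa [norm_smul] using (integrableOn_exp_neg_mul_abs_sub_smul ha hfi z).norm
  · rw [norm_smul, norm_eq_abs]
    gcongr
    exact hk x hx.le

theorem norm_duhamel_add_norm_duhamel_le (ha : 0 ≤ a)
    (hfi : IntegrableOn (fun x ↦ exp (-(a * x)) • f x) (Ioi 0)) (hz : 0 ≤ z) :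
    ‖duhamel a (-laplaceIntegral a f) f z‖ + ‖duhamel (-a) (-laplaceIntegral a f) f z‖
      ≤ 2 * absPotential a f z := by
  set k : ℝ → E := fun x ↦ exp (-(a * |x - z|)) • f x
  have hk : IntegrableOn k (Ioi 0) := integrableOn_exp_neg_mul_abs_sub_smul ha hfi z
  have hsplit : (∫ x in Ioc 0 z, ‖k x‖) + ∫ x in Ioi z, ‖k x‖ = absPotential a f z := by
    rw [← intervalIntegral.integral_of_le hz,
      intervalIntegral.integral_interval_add_Ioi hk.norm (hk.mono_set (Ioi_subset_Ioi hz)).norm]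
    simp [k, absPotential, norm_smul]
  have hreflected : ‖∫ x in Ioi 0, exp (-(a * (x + z))) • f x‖ ≤ absPotential a f z :=
    norm_integral_smul_le_absPotential ha hfi fun x hx ↦ by
      simpa using exp_neg_mul_add_le ha hx hz
  rw [duhamel_neg_laplaceIntegral hfi hz, duhamel_neg_neg_laplaceIntegral hz, norm_neg]
  linarith [norm_integral_le_integral_norm (μ := volume.restrict (Ioi z)) k,
    norm_integral_le_integral_norm (μ := volume.restrict (Ioc 0 z)) k,
    norm_sub_le (∫ x in Ioc 0 z, k x) (∫ x in Ioi 0, exp (-(a * (x + z))) • f x)]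

end GreenFunction

section GreenSol

variable {a z : ℝ} {f : ℝ → ℂ}

theorem greenSol_eq_integral_smul (a : ℝ) (f : ℝ → ℂ) (z : ℝ) :
    greenSol a f z = -(1 / (2 * (a : ℂ))) *
      ∫ x in Ioi 0, (exp (-(a * |x - z|)) - exp (-(a * (x + z)))) • f x := by
  simp only [greenSol, integral_Ici_eq_integral_Ioi, Complex.real_smul]

theorem greenSol_eq_duhamel_sub_duhamel (ha : 0 ≤ a)
    (hfi : IntegrableOn (fun x ↦ exp (-(a * x)) • f x) (Ioi 0)) (hz : 0 ≤ z) :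
    greenSol a f z = 1 / (2 * (a : ℂ)) *
      (duhamel a (-laplaceIntegral a f) f z - duhamel (-a) (-laplaceIntegral a f) f z) := by
  have hk := integrableOn_exp_neg_mul_abs_sub_smul ha hfi z
  simp only [greenSol_eq_integral_smul, sub_smul]
  rw [integral_sub hk (integrableOn_exp_neg_mul_add_smul hfi z),
    ← intervalIntegral.integral_interval_add_Ioi hk (hk.mono_set (Ioi_subset_Ioi hz)),
    intervalIntegral.integral_of_le hz, duhamel_neg_laplaceIntegral hfi hz,
    duhamel_neg_neg_laplaceIntegral hz]
  ring

theorem derivWithin_greenSol (ha : 0 < a) (hf : ContinuousOn f (Ici 0))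
    (hfi : IntegrableOn (fun x ↦ exp (-(a * x)) • f x) (Ioi 0)) (hz : 0 ≤ z) :
    derivWithin (greenSol a f) (Ici 0) z = 1 / 2 *
      (duhamel a (-laplaceIntegral a f) f z + duhamel (-a) (-laplaceIntegral a f) f z) := by
  have ha' : (a : ℂ) ≠ 0 := by exact_mod_cast ha.ne'
  have h := ((hasDerivWithinAt_duhamel (c := a) (K := -laplaceIntegral a f) hf hz).sub
    (hasDerivWithinAt_duhamel (c := -a) (K := -laplaceIntegral a f) hf hz)).const_mul
      (1 / (2 * (a : ℂ)))
  have hφ := h.congr_of_mem (f₁ := greenSol a f)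
    (fun x hx ↦ greenSol_eq_duhamel_sub_duhamel ha.le hfi hx) hz
  rw [hφ.derivWithin (uniqueDiffOn_Ici 0 z hz), Complex.real_smul, Complex.real_smul]
  push_cast
  field_simp
  ring

theorem derivWithin_derivWithin_greenSol (ha : 0 < a) (hf : ContinuousOn f (Ici 0))
    (hfi : IntegrableOn (fun x ↦ exp (-(a * x)) • f x) (Ioi 0)) (hz : 0 ≤ z) :
    derivWithin (derivWithin (greenSol a f) (Ici 0)) (Ici 0) z
      = f z + (a : ℂ) ^ 2 * greenSol a f z := by
  have h := ((hasDerivWithinAt_duhamel (c := a) (K := -laplaceIntegral a f) hf hz).add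
    (hasDerivWithinAt_duhamel (c := -a) (K := -laplaceIntegral a f) hf hz)).const_mul (1 / 2 : ℂ)
  have hφ' := h.congr_of_mem (f₁ := derivWithin (greenSol a f) (Ici 0))
    (fun x hx ↦ derivWithin_greenSol ha hf hfi hx) hz
  rw [hφ'.derivWithin (uniqueDiffOn_Ici 0 z hz), greenSol_eq_duhamel_sub_duhamel ha.le hfi hz,
    Complex.real_smul, Complex.real_smul]
  push_cast
  field_simp
  ring

theorem norm_greenSol_le (ha : 0 ≤ a)
    (hfi : IntegrableOn (fun x ↦ exp (-(a * x)) • f x) (Ioi 0)) (hz : 0 ≤ z) :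
    ‖greenSol a f z‖ ≤ 1 / (2 * a) * absPotential a f z := by
  have hkernel (x : ℝ) (hx : 0 ≤ x) :
      |exp (-(a * |x - z|)) - exp (-(a * (x + z)))| ≤ exp (-(a * |x - z|)) := by
    rw [abs_of_nonneg (sub_nonneg.mpr (exp_neg_mul_add_le ha hx hz))]
    exact sub_le_self _ (exp_nonneg _)
  have hnorm : ‖-(1 / (2 * (a : ℂ)))‖ = 1 / (2 * a) := by simp [abs_of_nonneg ha]
  rw [greenSol_eq_integral_smul, norm_mul, hnorm]
  gcongr
  exact norm_integral_smul_le_absPotential ha hfi hkernel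

theorem norm_derivWithin_greenSol_le (ha : 0 < a) (hf : ContinuousOn f (Ici 0))
    (hfi : IntegrableOn (fun x ↦ exp (-(a * x)) • f x) (Ioi 0)) (hz : 0 ≤ z) :
    ‖derivWithin (greenSol a f) (Ici 0) z‖ ≤ absPotential a f z := by
  rw [derivWithin_greenSol ha hf hfi hz, norm_mul, norm_div, norm_one, Complex.norm_ofNat]
  linarith [norm_duhamel_add_norm_duhamel_le ha.le hfi hz,
    norm_add_le (duhamel a (-laplaceIntegral a f) f z) (duhamel (-a) (-laplaceIntegral a f) f z)]

end GreenSol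

section Norms

variable {P p : ℕ} {β δ z : ℝ} {f g h : ℝ → ℂ}

theorem one_le_wt (hδ : 0 ≤ δ) (hz : 0 ≤ z) : 1 ≤ wt P p δ z :=
  le_add_of_nonneg_right (Finset.sum_nonneg fun _ _ ↦ by positivity)

theorem wt_one (hP : 1 ≤ P) (δ z : ℝ) : wt P 1 δ z = 1 + δ⁻¹ * (1 + (z / δ) ^ P)⁻¹ := by
  simp [wt, Nat.sub_add_cancel hP]

theorem norm_le_of_blNorm_ne_top (hδ : 0 ≤ δ) (hfin : blNorm P β δ p f ≠ ⊤) (hz : 0 ≤ z) :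
    ‖f z‖ ≤ (blNorm P β δ p f).toReal * (exp (-(β * z)) * wt P p δ z) := by
  have hwt : 0 < wt P p δ z := one_pos.trans_le (one_le_wt hδ hz)
  have hsup : (wt P p δ z)⁻¹ * exp (β * z) * ‖f z‖ ≤ (blNorm P β δ p f).toReal :=
    (ENNReal.ofReal_le_iff_le_toReal hfin).mp
      (le_iSup (fun y : Ici (0 : ℝ) ↦
        ENNReal.ofReal ((wt P p δ y)⁻¹ * exp (β * y) * ‖f y‖)) ⟨z, hz⟩)
  calc ‖f z‖ = (wt P p δ z)⁻¹ * exp (β * z) * ‖f z‖ * (exp (-(β * z)) * wt P p δ z) := by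
        rw [exp_neg]
        field_simp
    _ ≤ _ := by gcongr

theorem expNorm_le_ofReal {M : ℝ} (hg : ∀ z, 0 ≤ z → ‖g z‖ ≤ M * exp (-(β * z))) :
    expNorm β g ≤ ENNReal.ofReal M := by
  refine iSup_le fun z ↦ ENNReal.ofReal_le_ofReal ?_
  calc exp (β * z) * ‖g z‖ ≤ exp (β * z) * (M * exp (-(β * z))) := by
        gcongr
        exact hg z z.2
    _ = M := by
        rw [exp_neg]
        field_simp

theorem blNorm_le_add_mul_expNorm {c : ℝ} (hδ : 0 ≤ δ) (hc : 0 ≤ c)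
    (hh : ∀ z, 0 ≤ z → ‖h z‖ ≤ ‖f z‖ + c * ‖g z‖) :
    blNorm P β δ p h ≤ blNorm P β δ p f + ENNReal.ofReal c * expNorm β g := by
  refine iSup_le fun z ↦ ?_
  have hwt : (wt P p δ z)⁻¹ ≤ 1 := inv_le_one_of_one_le₀ (one_le_wt hδ z.2)
  have hwt' : 0 ≤ (wt P p δ z)⁻¹ := inv_nonneg.mpr (zero_le_one.trans (one_le_wt hδ z.2))
  have hpoint : (wt P p δ z)⁻¹ * exp (β * z) * ‖h z‖
      ≤ (wt P p δ z)⁻¹ * exp (β * z) * ‖f z‖ + c * (exp (β * z) * ‖g z‖) :=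
    calc (wt P p δ z)⁻¹ * exp (β * z) * ‖h z‖
        ≤ (wt P p δ z)⁻¹ * exp (β * z) * (‖f z‖ + c * ‖g z‖) := by
          gcongr
          exact hh z z.2
      _ = (wt P p δ z)⁻¹ * exp (β * z) * ‖f z‖
            + (wt P p δ z)⁻¹ * (c * (exp (β * z) * ‖g z‖)) := by ring
      _ ≤ _ := by
          gcongr _ + ?_
          exact mul_le_of_le_one_left (by positivity) hwt
  refine (ENNReal.ofReal_le_ofReal hpoint).trans ?_
  rw [ENNReal.ofReal_add (by positivity) (by positivity), ENNReal.ofReal_mul hc]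
  gcongr
  · exact le_iSup (fun y : Ici (0 : ℝ) ↦
      ENNReal.ofReal ((wt P p δ y)⁻¹ * exp (β * y) * ‖f y‖)) z
  · exact le_iSup (fun y : Ici (0 : ℝ) ↦ ENNReal.ofReal (exp (β * y) * ‖g y‖)) z

end Norms

section BoundaryLayerKernel

theorem integral_exp_neg_mul_abs {c : ℝ} (hc : 0 < c) : ∫ x : ℝ, exp (-(c * |x|)) = 2 / c := by
  have h := integral_exp_mul_Ioi (neg_neg_of_pos hc) 0
  simp only [neg_mul, mul_zero, exp_zero, neg_div_neg_eq] at h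
  rw [integral_comp_abs (f := fun x ↦ exp (-(c * x))), h, mul_one_div]

theorem integrable_exp_neg_mul_abs {c : ℝ} (hc : 0 < c) :
    Integrable fun x : ℝ ↦ exp (-(c * |x|)) :=
  .of_integral_ne_zero (by rw [integral_exp_neg_mul_abs hc]; positivity)

theorem integral_Ioi_inv_one_add_div_sq {δ : ℝ} (hδ : 0 < δ) :
    ∫ x in Ioi 0, (1 + (x / δ) ^ 2)⁻¹ = δ * (π / 2) := by
  have h := integral_comp_mul_left_Ioi (fun y : ℝ ↦ (1 + y ^ 2)⁻¹) 0 (inv_pos.mpr hδ)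
  simpa [div_eq_inv_mul] using h

theorem inv_one_add_pow_le {n : ℕ} (hn : 2 ≤ n) {y : ℝ} (hy : 0 ≤ y) :
    (1 + y ^ n)⁻¹ ≤ 2 * (1 + y ^ 2)⁻¹ := by
  have hpow : 1 + y ^ 2 ≤ 2 * (1 + y ^ n) := by
    rcases le_total y 1 with hy1 | hy1
    · linarith [pow_le_one₀ (n := 2) hy hy1, pow_nonneg hy n]
    · linarith [pow_le_pow_right₀ hy1 hn, pow_nonneg hy n]
  rw [← div_eq_mul_inv, inv_eq_one_div, div_le_div_iff₀ (by positivity) (by positivity)]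
  linarith

theorem exp_neg_mul_abs_sub_mul_exp_neg_le (a β x z : ℝ) :
    exp (-(a * |x - z|)) * exp (-(β * x)) ≤ exp (-(β * z)) * exp (-((a - |β|) * |x - z|)) := by
  rw [← exp_add, ← exp_add, exp_le_exp]
  have h : -(β * (x - z)) ≤ |β| * |x - z| := by
    rw [← abs_mul]
    exact neg_le_abs _
  linarith

/-- A majorant of the kernel `e^{-c|x-z|}` times the boundary-layer weight of order one: the weight
may be replaced by one with `P = 2`, and in its singular part the exponential is dropped. -/
noncomputable def blMajorant (c δ z x : ℝ) : ℝ :=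
  exp (-(c * |x - z|)) + 2 * δ⁻¹ * (1 + (x / δ) ^ 2)⁻¹

variable {P : ℕ} {a β c δ x z : ℝ} {f : ℝ → ℂ}

theorem integrable_blMajorant (hc : 0 < c) (hδ : δ ≠ 0) (z : ℝ) :
    Integrable (blMajorant c δ z) :=
  ((integrable_exp_neg_mul_abs hc).comp_sub_right z).add
    ((integrable_inv_one_add_sq.comp_div hδ).const_mul _)

theorem integral_Ioi_blMajorant_le (hc : 0 < c) (hδ : 0 < δ) (z : ℝ) :
    ∫ x in Ioi 0, blMajorant c δ z x ≤ 2 / c + π := by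
  have hexp : Integrable fun x ↦ exp (-(c * |x - z|)) :=
    (integrable_exp_neg_mul_abs hc).comp_sub_right z
  have hfree : ∫ x in Ioi 0, exp (-(c * |x - z|)) ≤ 2 / c :=
    calc ∫ x in Ioi 0, exp (-(c * |x - z|)) ≤ ∫ x, exp (-(c * |x - z|)) :=
          setIntegral_le_integral hexp (ae_of_all _ fun x ↦ exp_nonneg _)
      _ = 2 / c := by
          rw [integral_sub_right_eq_self (fun x ↦ exp (-(c * |x|))), integral_exp_neg_mul_abs hc]
  have hlayer : ∫ x in Ioi 0, 2 * δ⁻¹ * (1 + (x / δ) ^ 2)⁻¹ = π := by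
    rw [integral_const_mul, integral_Ioi_inv_one_add_div_sq hδ]
    field_simp
  unfold blMajorant
  rw [integral_add hexp.integrableOn
    ((integrable_inv_one_add_sq.comp_div hδ.ne').const_mul _).integrableOn, hlayer]
  gcongr

theorem exp_neg_mul_wt_one_le_blMajorant (hP : 2 ≤ P) (hc : 0 ≤ c) (hδ : 0 ≤ δ) (hx : 0 ≤ x)
    (z : ℝ) : exp (-(c * |x - z|)) * wt P 1 δ x ≤ blMajorant c δ z x := by
  have hexp : exp (-(c * |x - z|)) ≤ 1 := exp_le_one_iff.mpr (by simpa using by positivity)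
  rw [wt_one (by omega), mul_add, mul_one, blMajorant, mul_comm 2 δ⁻¹, mul_assoc δ⁻¹]
  gcongr _ + ?_
  calc exp (-(c * |x - z|)) * (δ⁻¹ * (1 + (x / δ) ^ P)⁻¹) ≤ δ⁻¹ * (1 + (x / δ) ^ P)⁻¹ :=
        mul_le_of_le_one_left (by positivity) hexp
    _ ≤ δ⁻¹ * (2 * (1 + (x / δ) ^ 2)⁻¹) := by
        gcongr
        exact inv_one_add_pow_le hP (by positivity)

theorem exp_neg_mul_norm_le_blMajorant (hP : 2 ≤ P) (hβ : |β| ≤ a) (hδ : 0 ≤ δ)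
    (hfin : blNorm P β δ 1 f ≠ ⊤) (hx : 0 ≤ x) (z : ℝ) :
    exp (-(a * |x - z|)) * ‖f x‖
      ≤ (blNorm P β δ 1 f).toReal * exp (-(β * z)) * blMajorant (a - |β|) δ z x := by
  set N := (blNorm P β δ 1 f).toReal
  have hwt : 0 ≤ wt P 1 δ x := zero_le_one.trans (one_le_wt hδ hx)
  calc exp (-(a * |x - z|)) * ‖f x‖
      ≤ exp (-(a * |x - z|)) * (N * (exp (-(β * x)) * wt P 1 δ x)) := by
        gcongr
        exact norm_le_of_blNorm_ne_top hδ hfin hx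
    _ = N * (exp (-(a * |x - z|)) * exp (-(β * x))) * wt P 1 δ x := by ring
    _ ≤ N * (exp (-(β * z)) * exp (-((a - |β|) * |x - z|))) * wt P 1 δ x := by
        gcongr N * ?_ * _
        exact exp_neg_mul_abs_sub_mul_exp_neg_le a β x z
    _ = N * exp (-(β * z)) * (exp (-((a - |β|) * |x - z|)) * wt P 1 δ x) := by ring
    _ ≤ N * exp (-(β * z)) * blMajorant (a - |β|) δ z x := by
        gcongr
        exact exp_neg_mul_wt_one_le_blMajorant hP (sub_nonneg.mpr hβ) hδ hx z

theorem integrableOn_exp_neg_smul_of_blNorm_ne_top (hP : 2 ≤ P) (hβ : |β| < a) (hδ : 0 < δ)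
    (hf : ContinuousOn f (Ici 0)) (hfin : blNorm P β δ 1 f ≠ ⊤) :
    IntegrableOn (fun x ↦ exp (-(a * x)) • f x) (Ioi 0) := by
  refine Integrable.mono' ((integrable_blMajorant (sub_pos.mpr hβ) hδ.ne' 0).const_mul
    ((blNorm P β δ 1 f).toReal * exp (-(β * 0)))).integrableOn ?_
    ((ae_restrict_mem measurableSet_Ioi).mono fun x (hx : 0 < x) ↦ ?_)
  · have hexp : ContinuousOn (fun x ↦ exp (-(a * x))) (Ioi 0) := by fun_prop
    exact (hexp.smul (hf.mono Ioi_subset_Ici_self)).aestronglyMeasurable measurableSet_Ioi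
  · simpa only [norm_smul, norm_of_nonneg (exp_nonneg _), sub_zero, abs_of_pos hx] using
      exp_neg_mul_norm_le_blMajorant hP hβ.le hδ.le hfin hx.le 0

theorem absPotential_le (hP : 2 ≤ P) (hβ : |β| < a) (hδ : 0 < δ)
    (hfin : blNorm P β δ 1 f ≠ ⊤) (z : ℝ) :
    absPotential a f z
      ≤ (2 / (a - |β|) + π) * (blNorm P β δ 1 f).toReal * exp (-(β * z)) := by
  set N := (blNorm P β δ 1 f).toReal
  have hmaj := ((integrable_blMajorant (sub_pos.mpr hβ) hδ.ne' z).const_mul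
    (N * exp (-(β * z)))).integrableOn (s := Ioi 0)
  calc absPotential a f z
      ≤ ∫ x in Ioi 0, N * exp (-(β * z)) * blMajorant (a - |β|) δ z x := by
        refine integral_mono_of_nonneg (ae_of_all _ fun x ↦ by positivity) hmaj
          ((ae_restrict_mem measurableSet_Ioi).mono fun x (hx : 0 < x) ↦ ?_)
        exact exp_neg_mul_norm_le_blMajorant hP hβ.le hδ.le hfin hx.le z
    _ ≤ N * exp (-(β * z)) * (2 / (a - |β|) + π) := by
        rw [integral_const_mul]
        gcongr
        exact integral_Ioi_blMajorant_le (sub_pos.mpr hβ) hδ z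
    _ = _ := by ring

end BoundaryLayerKernel

section EllipticEstimate

variable {P : ℕ} {a β δ : ℝ} {f : ℝ → ℂ}

theorem expNorm_greenSol_le (hP : 2 ≤ P) (hβ : |β| < a) (hδ : 0 < δ)
    (hf : ContinuousOn f (Ici 0)) (hfin : blNorm P β δ 1 f ≠ ⊤) :
    expNorm β (greenSol a f)
      ≤ ENNReal.ofReal ((2 / (a - |β|) + π) / (2 * a)) * blNorm P β δ 1 f := by
  have ha : 0 < a := (abs_nonneg β).trans_lt hβ
  have hfi := integrableOn_exp_neg_smul_of_blNorm_ne_top hP hβ hδ hf hfin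
  rw [← ENNReal.ofReal_toReal hfin, ← ENNReal.ofReal_mul' ENNReal.toReal_nonneg]
  refine expNorm_le_ofReal fun z hz ↦ ?_
  calc ‖greenSol a f z‖ ≤ 1 / (2 * a) * absPotential a f z := norm_greenSol_le ha.le hfi hz
    _ ≤ 1 / (2 * a) *
          ((2 / (a - |β|) + π) * (blNorm P β δ 1 f).toReal * exp (-(β * z))) := by
        gcongr
        exact absPotential_le hP hβ hδ hfin z
    _ = _ := by ring

theorem expNorm_derivWithin_greenSol_le (hP : 2 ≤ P) (hβ : |β| < a) (hδ : 0 < δ)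
    (hf : ContinuousOn f (Ici 0)) (hfin : blNorm P β δ 1 f ≠ ⊤) :
    expNorm β (derivWithin (greenSol a f) (Ici 0))
      ≤ ENNReal.ofReal (2 / (a - |β|) + π) * blNorm P β δ 1 f := by
  have ha : 0 < a := (abs_nonneg β).trans_lt hβ
  have hfi := integrableOn_exp_neg_smul_of_blNorm_ne_top hP hβ hδ hf hfin
  rw [← ENNReal.ofReal_toReal hfin, ← ENNReal.ofReal_mul' ENNReal.toReal_nonneg]
  exact expNorm_le_ofReal fun z hz ↦
    (norm_derivWithin_greenSol_le ha hf hfi hz).trans (absPotential_le hP hβ hδ hfin z)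

theorem blNorm_derivWithin_derivWithin_greenSol_le {p : ℕ} (ha : 0 < a) (hδ : 0 ≤ δ)
    (hf : ContinuousOn f (Ici 0)) (hfi : IntegrableOn (fun x ↦ exp (-(a * x)) • f x) (Ioi 0)) :
    blNorm P β δ p (derivWithin (derivWithin (greenSol a f) (Ici 0)) (Ici 0))
      ≤ blNorm P β δ p f + ENNReal.ofReal (a ^ 2) * expNorm β (greenSol a f) := by
  refine blNorm_le_add_mul_expNorm hδ (sq_nonneg a) fun z hz ↦ ?_
  rw [derivWithin_derivWithin_greenSol ha hf hfi hz]
  refine (norm_add_le _ _).trans_eq ?_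
  rw [norm_mul, norm_pow, Complex.norm_real, norm_of_nonneg ha.le]

theorem expNorm_add_expNorm_add_blNorm_greenSol_le (hP : 2 ≤ P) (hβ : |β| < a) (hδ : 0 < δ)
    (hf : ContinuousOn f (Ici 0)) (hfin : blNorm P β δ 1 f ≠ ⊤) :
    ENNReal.ofReal (a ^ 2) * expNorm β (greenSol a f)
      + ENNReal.ofReal a * expNorm β (derivWithin (greenSol a f) (Ici 0))
      + blNorm P β δ 1 (derivWithin (derivWithin (greenSol a f) (Ici 0)) (Ici 0))
      ≤ ENNReal.ofReal (2 * (2 / (a - |β|) + π) * a + 1) * blNorm P β δ 1 f := by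
  have ha : 0 < a := (abs_nonneg β).trans_lt hβ
  have hφ := expNorm_greenSol_le hP hβ hδ hf hfin
  have hφ' := expNorm_derivWithin_greenSol_le hP hβ hδ hf hfin
  have hφ'' := blNorm_derivWithin_derivWithin_greenSol_le (P := P) (β := β) (p := 1) ha hδ.le hf
    (integrableOn_exp_neg_smul_of_blNorm_ne_top hP hβ hδ hf hfin)
  have hB : 0 ≤ 2 / (a - |β|) + π := by
    have := sub_pos.mpr hβ
    positivity
  generalize 2 / (a - |β|) + π = B at hφ hφ' hB ⊢
  set N := blNorm P β δ 1 f
  have hsplit : 2 * B * a + 1 = a ^ 2 * (B / (2 * a)) + a * B + (1 + a ^ 2 * (B / (2 * a))) := by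
    field_simp
    ring
  calc _ ≤ ENNReal.ofReal (a ^ 2) * (ENNReal.ofReal (B / (2 * a)) * N)
        + ENNReal.ofReal a * (ENNReal.ofReal B * N)
        + (N + ENNReal.ofReal (a ^ 2) * (ENNReal.ofReal (B / (2 * a)) * N)) := by
        gcongr
        exact hφ''.trans (by gcongr)
    _ = ENNReal.ofReal (2 * B * a + 1) * N := by
        rw [hsplit, ENNReal.ofReal_add (by positivity) (by positivity),
          ENNReal.ofReal_add (by positivity) (by positivity),
          ENNReal.ofReal_add (by positivity) (by positivity), ENNReal.ofReal_one,
          ENNReal.ofReal_mul (by positivity), ENNReal.ofReal_mul ha.le]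
        ring

theorem elliptic_estimate_bl_second_order_general (hP : 2 ≤ P) {r : ℝ} (hβ : |β| < r) {α : ℝ}
    (hα : r ≤ |α|) (hδ : 0 < δ) (hf : ContinuousOn f (Ici 0)) (hfin : blNorm P β δ 1 f < ⊤) :
    ENNReal.ofReal (α ^ 2) * expNorm β (greenSol |α| f)
      + ENNReal.ofReal |α| * expNorm β (derivWithin (greenSol |α| f) (Ici 0))
      + blNorm P β δ 1 (derivWithin (derivWithin (greenSol |α| f) (Ici 0)) (Ici 0))
      ≤ ENNReal.ofReal ((2 * (2 / (r - |β|) + π) + 1 / r) * |α|) * blNorm P β δ 1 f := by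
  have hr : 0 < r := (abs_nonneg β).trans_lt hβ
  have hone : 1 ≤ 1 / r * |α| := by
    rw [one_div_mul_eq_div]
    exact (one_le_div hr).mpr hα
  rw [← sq_abs α, add_mul]
  refine (expNorm_add_expNorm_add_blNorm_greenSol_le hP (hβ.trans_le hα) hδ hf hfin.ne).trans ?_
  gcongr

end EllipticEstimate

/-- the second-order elliptic estimate with boundary-layer data:
`α²‖φ‖_β + |α|‖φ'‖_β + ‖φ''‖_{β,δ,1} ≤ C|α|‖f‖_{β,δ,1}`,
with `C = C(β,P)` independent of `α` and `δ`. -/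
theorem elliptic_estimate_bl_second_order (P : ℕ) (hP : 2 ≤ P)
    (β : ℝ) (hβ0 : 0 < β) (hβ : β < 1/2) :
    ∃ C : ℝ, 0 < C ∧ ∀ α : ℝ, 1 ≤ |α| → ∀ δ ∈ Set.Ioc (0:ℝ) 1, ∀ f : ℝ → ℂ,
      ContinuousOn f (Set.Ici 0) → blNorm P β δ 1 f < ⊤ →
      ENNReal.ofReal (α ^ 2) * expNorm β (greenSol |α| f)
        + ENNReal.ofReal |α| * expNorm β (derivWithin (greenSol |α| f) (Set.Ici 0))
        + blNorm P β δ 1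
            (derivWithin (derivWithin (greenSol |α| f) (Set.Ici 0)) (Set.Ici 0))
        ≤ ENNReal.ofReal (C * |α|) * blNorm P β δ 1 f := by
  have hβ1 : |β| < 1 := by rw [abs_of_pos hβ0]; linarith
  exact ⟨2 * (2 / (1 - |β|) + π) + 1 / 1, by have := sub_pos.mpr hβ1; positivity,
    fun α hα δ hδ f hf hfin ↦
      elliptic_estimate_bl_second_order_general hP hβ1 hα hδ.1 hf hfin⟩
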